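/- Let (a_k)_{k=0}^∞ be a nonnegative real sequence such that the power series A(z) = ∑_{k=0}^∞ a_k z^k has a finite (positive) radius of convergence (equivalently, its sum extends to a meromorphic function on ℂ with at least one pole). Then (a_k) is a TP_∞-preserver if and only if there exist constants C > 0 and β > 0 such that a_k = C·β^k for every k ≥ 0 (i.e., A(z) = C/(1 − βz)). -/

import Mathlib

/-- A real sequence `(a_k)` is totally positive (TP_∞) if all finite minors of the
infinite Toeplitz matrix `(a_{j-i})` (with `a_k = 0` for `k < 0`) are nonnegative. -/
def IsTotallyPositive (a : ℕ → ℝ) : Prop :=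
  ∀ (n : ℕ) (i j : Fin n → ℕ), StrictMono i → StrictMono j →
    0 ≤ (Matrix.of fun p q : Fin n => if i p ≤ j q then a (j q - i p) else 0).det

/-- A real sequence is `m`-times positive (TP_m) if all such minors of order at most `m`
are nonnegative. -/
def IsMultiplyPositive (m : ℕ) (a : ℕ → ℝ) : Prop :=
  ∀ (n : ℕ), n ≤ m → ∀ (i j : Fin n → ℕ), StrictMono i → StrictMono j →
    0 ≤ (Matrix.of fun p q : Fin n => if i p ≤ j q then a (j q - i p) else 0).det

/-- A nonnegative sequence `(a_k)` is a TP_∞-preserver if for every totally positive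
sequence `(b_k)`, the sequence `(a_k b_k)` is totally positive. -/
def IsTPPreserver (a : ℕ → ℝ) : Prop :=
  ∀ b : ℕ → ℝ, IsTotallyPositive b → IsTotallyPositive (fun k => a k * b k)

/-!
Multiplying `a` by the totally positive coefficient sequences of `z ^ m / (1 - z)` and
`z ^ m / (1 - z) ^ 2` and looking at one minor of order three of each product gives polynomial
inequalities for consecutive terms of `a`. Since `a` is log-concave, a finite radius of convergence
forces the ratios `a (k + 1) / a k` to decrease to a positive limit, so the defects
`d k = 1 - a k * a (k + 2) / a (k + 1) ^ 2` tend to zero. To leading order the two inequalities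
read `d (k + 1) ≤ d k ^ 2` and `d k ≤ 6 * d (k + 1)`, which is impossible for small `d k ≠ 0`:
hence `a` is eventually geometric. The second inequality then propagates this down to `k = 0`.
-/

open Filter Finset Topology

section Determinants

variable {R : Type*} [CommRing R]

lemma det_sum_columns {n ι : Type*} [DecidableEq n] [Fintype n] (A : Matrix n ι R)
    (I : n → Finset ι) :
    (Matrix.of fun p q => ∑ l ∈ I q, A p l).det =
      ∑ r ∈ Fintype.piFinset I, (A.submatrix id r).det := by
  have expand := (Matrix.detRowAlternating (R := R) (n := n)).toMultilinearMap.map_sum_finset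
    (fun _ l p => A p l) I
  calc (Matrix.of fun p q => ∑ l ∈ I q, A p l).det
      = Matrix.det (fun q => ∑ l ∈ I q, fun p => A p l) := by
        rw [← Matrix.det_transpose]
        congr 1
        ext q p
        simp [Finset.sum_apply]
    _ = ∑ r ∈ Fintype.piFinset I, Matrix.det (fun q p => A p (r q)) := expand
    _ = ∑ r ∈ Fintype.piFinset I, (A.submatrix id r).det :=
        sum_congr rfl fun r _ => Matrix.det_transpose (A.submatrix id r)

/-- The intervals `[0, j 0], (j 0, j 1], (j 1, j 2], …` cut out by the columns `j`. -/
def columnGap {n : ℕ} (j : Fin (n + 1) → ℕ) : Fin (n + 1) → Finset ℕ :=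
  Fin.cons (range (j 0 + 1)) fun q => Ico (j q.castSucc + 1) (j q.succ + 1)

lemma strictMono_of_mem_columnGap {n : ℕ} {j r : Fin (n + 1) → ℕ}
    (hr : ∀ q, r q ∈ columnGap j q) : StrictMono r := by
  have r_le : ∀ q, r q ≤ j q :=
    Fin.cases (Nat.le_of_lt_succ (mem_range.1 (hr 0)))
      fun q => Nat.le_of_lt_succ (mem_Ico.1 (hr q.succ)).2
  exact Fin.strictMono_iff_lt_succ.2 fun q =>
    (r_le q.castSucc).trans_lt (mem_Ico.1 (hr q.succ)).1

/- Subtracting from each column its predecessor turns the partial sums into sums over the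
gaps, and the determinant is then expanded in the columns. -/
lemma det_partialSum_columns {n : ℕ} (A : Matrix (Fin (n + 1)) ℕ R) {j : Fin (n + 1) → ℕ}
    (hj : StrictMono j) :
    (Matrix.of fun p q => ∑ l ∈ range (j q + 1), A p l).det =
      ∑ r ∈ Fintype.piFinset (columnGap j), (A.submatrix id r).det := by
  rw [← det_sum_columns]
  refine Matrix.det_eq_of_forall_col_eq_smul_add_pred (fun _ => 1) (fun _ => rfl) fun p q => ?_
  have le_succ : j q.castSucc + 1 ≤ j q.succ + 1 :=
    Nat.succ_le_succ (hj.monotone (Fin.castSucc_le_succ q))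
  simp only [Matrix.of_apply, columnGap, Fin.cons_succ, one_mul]
  rw [← sum_range_add_sum_Ico _ le_succ, add_comm]

end Determinants

section Toeplitz

/-- The infinite upper triangular Toeplitz matrix `(a_{j-i})` of a sequence, with `a_k = 0` for
`k < 0`. -/
def toeplitz {R : Type*} [Zero R] (a : ℕ → R) : Matrix ℕ ℕ R :=
  Matrix.of fun i j => if i ≤ j then a (j - i) else 0

lemma isTotallyPositive_iff_submatrix {a : ℕ → ℝ} :
    IsTotallyPositive a ↔ ∀ (n : ℕ) (i j : Fin n → ℕ), StrictMono i → StrictMono j →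
      0 ≤ ((toeplitz a).submatrix i j).det :=
  Iff.rfl

lemma toeplitz_partialSum {R : Type*} [AddCommMonoid R] (a : ℕ → R) (i j : ℕ) :
    toeplitz (fun k => ∑ l ∈ range (k + 1), a l) i j = ∑ l ∈ range (j + 1), toeplitz a i l := by
  simp only [toeplitz, Matrix.of_apply, ← sum_filter]
  have filter_eq : (range (j + 1)).filter (i ≤ ·) = Ico i (j + 1) := by
    ext l
    simp only [mem_filter, mem_range, mem_Ico, and_comm]
  rw [filter_eq, sum_Ico_eq_sum_range]
  split_ifs with hij
  · simp only [Nat.add_sub_cancel_left, Nat.sub_add_comm hij]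
  · rw [Nat.sub_eq_zero_of_le (not_le.1 hij), range_zero, sum_empty]

lemma toeplitz_single {R : Type*} [Zero R] [One R] (m i j : ℕ) :
    toeplitz (Pi.single m (1 : R)) i j = if i + m = j then 1 else 0 := by
  simp only [toeplitz, Matrix.of_apply, Pi.single_apply, ← ite_and]
  congr 1
  exact propext (by omega)

lemma toeplitz_geometric_mul {K : Type*} [Field K] {C β : K} (hβ : β ≠ 0) (b : ℕ → K)
    (i j : ℕ) :
    toeplitz (fun k => C * β ^ k * b k) i j = C * (β ^ i)⁻¹ * (β ^ j * toeplitz b i j) := by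
  simp only [toeplitz, Matrix.of_apply]
  split_ifs with hij
  · rw [pow_sub₀ _ hβ hij]
    ring
  · simp only [mul_zero]

end Toeplitz

section TotallyPositiveSequences

lemma IsTotallyPositive.partialSum {a : ℕ → ℝ} (ha : IsTotallyPositive a) :
    IsTotallyPositive fun k => ∑ l ∈ range (k + 1), a l := by
  rw [isTotallyPositive_iff_submatrix] at ha ⊢
  rintro (_ | n) i j hi hj
  · simp only [Matrix.det_isEmpty, zero_le_one]
  · have minor_eq : (toeplitz fun k => ∑ l ∈ range (k + 1), a l).submatrix i j =
        Matrix.of fun p q => ∑ l ∈ range (j q + 1), (toeplitz a).submatrix i id p l := by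
      ext p q
      exact toeplitz_partialSum a (i p) (j q)
    rw [minor_eq, det_partialSum_columns _ hj]
    exact sum_nonneg fun r hr =>
      ha _ i r hi (strictMono_of_mem_columnGap (Fintype.mem_piFinset.1 hr))

lemma isTotallyPositive_single (m : ℕ) : IsTotallyPositive (Pi.single m 1) := by
  rw [isTotallyPositive_iff_submatrix]
  intro n i j hi hj
  by_cases shift_mem : ∀ p, i p + m ∈ Set.range j
  · have hi' : StrictMono fun p => i p + m := fun _ _ h => Nat.add_lt_add_right (hi h) m
    have shift_eq : (fun p => i p + m) = j := by
      refine (hi'.range_inj hj).1 (Set.eq_of_subset_of_ncard_le ?_ ?_)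
      · exact Set.range_subset_iff.2 shift_mem
      · rw [Set.ncard_range_of_injective hj.injective, Set.ncard_range_of_injective hi'.injective]
    have minor_eq_one : (toeplitz (Pi.single m (1 : ℝ))).submatrix i j = 1 := by
      ext p q
      rw [Matrix.submatrix_apply, toeplitz_single, congrFun shift_eq p, Matrix.one_apply]
      simp only [hj.injective.eq_iff]
    rw [minor_eq_one, Matrix.det_one]
    exact zero_le_one
  · push Not at shift_mem
    obtain ⟨p, hp⟩ := shift_mem
    refine (Matrix.det_eq_zero_of_row_eq_zero p fun q => ?_).ge
    rw [Matrix.submatrix_apply, toeplitz_single, if_neg fun h => hp ⟨q, h.symm⟩]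

/-- The coefficient sequence of `z ^ m / (1 - z)`. -/
def unitStep (m k : ℕ) : ℝ := if m ≤ k then 1 else 0

/-- The coefficient sequence of `z ^ m / (1 - z) ^ 2`; the truncated subtraction makes it vanish
below `m`. -/
def ramp (m k : ℕ) : ℝ := (k + 1 - m : ℕ)

lemma isTotallyPositive_unitStep (m : ℕ) : IsTotallyPositive (unitStep m) := by
  convert (isTotallyPositive_single m).partialSum using 2 with k
  simp only [unitStep, Pi.single_apply, sum_ite_eq', mem_range, Nat.lt_succ_iff]

lemma isTotallyPositive_ramp (m : ℕ) : IsTotallyPositive (ramp m) := by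
  convert (isTotallyPositive_unitStep m).partialSum using 2 with k
  have filter_eq : (range (k + 1)).filter (m ≤ ·) = Ico m (k + 1) := by
    ext l
    simp only [mem_filter, mem_range, mem_Ico, and_comm]
  simp only [ramp, unitStep, sum_boole, filter_eq, Nat.card_Ico]

theorem isTPPreserver_geometric {C β : ℝ} (hC : 0 ≤ C) (hβ : 0 < β) :
    IsTPPreserver fun k => C * β ^ k := by
  intro b hb
  rw [isTotallyPositive_iff_submatrix] at hb ⊢
  intro n i j hi hj
  have minor_eq : (toeplitz fun k => C * β ^ k * b k).submatrix i j =
      Matrix.of fun p q => C * (β ^ i p)⁻¹ *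
        (Matrix.of fun p q => β ^ j q * (toeplitz b).submatrix i j p q) p q := by
    ext p q
    exact toeplitz_geometric_mul hβ.ne' b (i p) (j q)
  rw [minor_eq, Matrix.det_mul_column, Matrix.det_mul_row]
  have minor_nonneg := hb n i j hi hj
  positivity

end TotallyPositiveSequences

section LowOrderMinors

variable {a : ℕ → ℝ}

lemma IsTotallyPositive.isMultiplyPositive (ha : IsTotallyPositive a) (m : ℕ) :
    IsMultiplyPositive m a :=
  fun n _ => ha n

namespace IsMultiplyPositive

lemma mono {l m : ℕ} (hlm : l ≤ m) (ha : IsMultiplyPositive m a) : IsMultiplyPositive l a :=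
  fun n hn => ha n (hn.trans hlm)

lemma nonneg (ha : IsMultiplyPositive 1 a) (k : ℕ) : 0 ≤ a k := by
  simpa using ha 1 le_rfl ![0] ![k] (Subsingleton.strictMono _) (Subsingleton.strictMono _)

lemma mul_le_mul_add (ha : IsMultiplyPositive 2 a) (i s t : ℕ) :
    a i * a (i + s + t) ≤ a (i + s) * a (i + t) := by
  rcases s.eq_zero_or_pos with rfl | hs
  · rfl
  rcases t.eq_zero_or_pos with rfl | ht
  · exact (mul_comm _ _).le
  have minor_nonneg := ha 2 le_rfl ![0, s] ![i + s, i + s + t]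
    (Fin.strictMono_iff_lt_succ.2 (by simpa using hs))
    (Fin.strictMono_iff_lt_succ.2 (by simpa using ht))
  have entry : i + s + t - s = i + t := by omega
  simp only [Matrix.det_fin_two, Matrix.of_apply, Matrix.cons_val, zero_le, Nat.le_add_left,
    if_true, Nat.sub_zero, Nat.add_sub_cancel, entry, show s ≤ i + s + t by omega] at minor_nonneg
  linarith

lemma mul_le_sq (ha : IsMultiplyPositive 2 a) (k : ℕ) : a k * a (k + 2) ≤ a (k + 1) ^ 2 := by
  simpa only [sq] using ha.mul_le_mul_add k 1 1

lemma contiguous_minor_nonneg (ha : IsMultiplyPositive 3 a) (k : ℕ) :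
    0 ≤ !![a (k + 2), a (k + 3), a (k + 4);
           a (k + 1), a (k + 2), a (k + 3);
           a k, a (k + 1), a (k + 2)].det := by
  convert ha 3 le_rfl (fun p => p) (fun q => k + 2 + q) Fin.val_strictMono
    (Fin.val_strictMono.const_add (k + 2)) using 2
  ext p q
  fin_cases p <;> fin_cases q <;> simp [add_assoc]

lemma pos_of_mem_Icc (ha : IsMultiplyPositive 2 a) {i j l : ℕ} (hj : j ∈ Set.Icc i l)
    (hi : 0 < a i) (hl : 0 < a l) : 0 < a j := by
  refine ((ha.mono one_le_two).nonneg j).lt_of_ne fun aj_eq_zero => ?_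
  have minor_le := ha.mul_le_mul_add i (j - i) (l - j)
  rw [Nat.add_sub_cancel' hj.1, Nat.add_sub_cancel' hj.2, ← aj_eq_zero, zero_mul] at minor_le
  exact minor_le.not_gt (mul_pos hi hl)

lemma eventually_pos (ha : IsMultiplyPositive 2 a) (hsupp : ∃ᶠ k in atTop, a k ≠ 0) :
    ∀ᶠ k in atTop, 0 < a k := by
  have pos_of_ne_zero {k : ℕ} (hk : a k ≠ 0) : 0 < a k :=
    ((ha.mono one_le_two).nonneg k).lt_of_ne' hk
  obtain ⟨i, hi⟩ := hsupp.exists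
  filter_upwards [eventually_ge_atTop i] with j hij
  obtain ⟨l, hjl, hl⟩ := frequently_atTop.1 hsupp j
  exact ha.pos_of_mem_Icc ⟨hij, hjl⟩ (pos_of_ne_zero hi) (pos_of_ne_zero hl)

end IsMultiplyPositive

/-- The minor of the Toeplitz matrix of `u * unitStep k` with rows `0, 1, 2` and columns
`k + 1, k + 2, k + 3`. Its sign bounds the log-concavity defect at `k + 1` by that at `k`. -/
def stepMinor (u : ℕ → ℝ) (k : ℕ) : ℝ :=
  !![u (k + 1), u (k + 2), u (k + 3);
     u k, u (k + 1), u (k + 2);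
     0, u k, u (k + 1)].det

/-- The minor of the Toeplitz matrix of `u * ramp k` with rows `0, 1, 2` and columns
`k + 2, k + 3, k + 4`. Its sign bounds the log-concavity defect at `k` by that at `k + 1`. -/
def rampMinor (u : ℕ → ℝ) (k : ℕ) : ℝ :=
  !![3 * u (k + 2), 4 * u (k + 3), 5 * u (k + 4);
     2 * u (k + 1), 3 * u (k + 2), 4 * u (k + 3);
     u k, 2 * u (k + 1), 3 * u (k + 2)].det

lemma stepMinor_eq (u : ℕ → ℝ) (k : ℕ) :
    stepMinor u k =
      u (k + 1) ^ 3 - 2 * u k * u (k + 1) * u (k + 2) + u k ^ 2 * u (k + 3) := by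
  simp only [stepMinor, Matrix.det_fin_three, Matrix.of_apply, Matrix.cons_val]
  ring

lemma rampMinor_eq (u : ℕ → ℝ) (k : ℕ) :
    rampMinor u k =
      27 * u (k + 2) ^ 3 - 48 * u (k + 1) * u (k + 2) * u (k + 3) + 16 * u k * u (k + 3) ^ 2 +
        20 * u (k + 1) ^ 2 * u (k + 4) - 15 * u k * u (k + 2) * u (k + 4) := by
  simp only [rampMinor, Matrix.det_fin_three, Matrix.of_apply, Matrix.cons_val]
  ring

lemma stepMinor_succ_nonneg {m : ℕ}
    (ha : IsMultiplyPositive 3 fun k => a k * unitStep (m + 1) k) : 0 ≤ stepMinor a (m + 1) := by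
  simpa [stepMinor, unitStep, add_assoc] using ha.contiguous_minor_nonneg m

lemma rampMinor_nonneg {m : ℕ} (ha : IsMultiplyPositive 3 fun k => a k * ramp m k) :
    0 ≤ rampMinor a m := by
  have ramp_add (l : ℕ) : ramp m (m + l) = l + 1 := by
    rw [ramp, add_assoc, Nat.add_sub_cancel_left, Nat.cast_succ]
  convert ha.contiguous_minor_nonneg m using 3
  have ramp_self : ramp m m = 1 := by simpa using ramp_add 0
  simp only [rampMinor, ramp_self, ramp_add]
  norm_num [mul_comm]

end LowOrderMinors

section LogConcavityDefect

variable {u : ℕ → ℝ}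

/-- The relative gap in the inequality `u k * u (k + 2) ≤ u (k + 1) ^ 2`; it vanishes identically
exactly for geometric sequences. -/
noncomputable def logConcavityDefect (u : ℕ → ℝ) (k : ℕ) : ℝ :=
  1 - u k * u (k + 2) / u (k + 1) ^ 2

lemma logConcavityDefect_nonneg {k : ℕ} (hlog : u k * u (k + 2) ≤ u (k + 1) ^ 2) :
    0 ≤ logConcavityDefect u k :=
  sub_nonneg.2 (div_le_one_of_le₀ hlog (sq_nonneg _))

lemma logConcavityDefect_eq_zero_iff {k : ℕ} (hu : u (k + 1) ≠ 0) :
    logConcavityDefect u k = 0 ↔ u k * u (k + 2) = u (k + 1) ^ 2 := by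
  rw [logConcavityDefect, sub_eq_zero, eq_comm, div_eq_one_iff_eq (pow_ne_zero 2 hu)]

lemma antitone_ratio (hpos : ∀ k, 0 < u k) (hlog : ∀ k, u k * u (k + 2) ≤ u (k + 1) ^ 2) :
    Antitone fun k => u (k + 1) / u k := by
  refine antitone_nat_of_succ_le fun k => ?_
  rw [div_le_div_iff₀ (hpos _) (hpos _)]
  linarith [hlog k]

lemma summable_mul_pow_of_tendsto_ratio_zero (hu : ∀ k, u k ≠ 0)
    (hratio : Tendsto (fun k => u (k + 1) / u k) atTop (𝓝 0)) (R : ℝ) :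
    Summable fun k => u k * R ^ k := by
  have ratio_mul_tendsto : Tendsto (fun k => ‖u (k + 1) / u k * R‖) atTop (𝓝 0) := by
    simpa using (hratio.mul_const R).norm
  refine summable_of_ratio_norm_eventually_le (r := 1 / 2) (by norm_num) ?_
  filter_upwards [ratio_mul_tendsto.eventually_le_const one_half_pos] with k hk
  calc ‖u (k + 1) * R ^ (k + 1)‖ = ‖u (k + 1) / u k * R‖ * ‖u k * R ^ k‖ := by
        rw [← norm_mul]
        congr 1
        field_simp [hu k]
        ring
    _ ≤ 1 / 2 * ‖u k * R ^ k‖ := by gcongr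

lemma exists_pos_tendsto_ratio (hpos : ∀ k, 0 < u k)
    (hlog : ∀ k, u k * u (k + 2) ≤ u (k + 1) ^ 2) {R : ℝ}
    (hdiv : ¬ Summable fun k => u k * R ^ k) :
    ∃ L > 0, Tendsto (fun k => u (k + 1) / u k) atTop (𝓝 L) := by
  have ratio_nonneg (k : ℕ) : 0 ≤ u (k + 1) / u k := (div_pos (hpos _) (hpos _)).le
  have ratio_tendsto := tendsto_atTop_ciInf (antitone_ratio hpos hlog)
    ⟨0, Set.forall_mem_range.2 ratio_nonneg⟩
  refine ⟨_, (ge_of_tendsto' ratio_tendsto ratio_nonneg).lt_of_ne' fun limit_eq_zero => ?_,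
    ratio_tendsto⟩
  rw [limit_eq_zero] at ratio_tendsto
  exact hdiv (summable_mul_pow_of_tendsto_ratio_zero (fun k => (hpos k).ne') ratio_tendsto R)

lemma tendsto_logConcavityDefect_zero {L : ℝ} (hL : L ≠ 0)
    (hratio : Tendsto (fun k => u (k + 1) / u k) atTop (𝓝 L)) :
    Tendsto (logConcavityDefect u) atTop (𝓝 0) := by
  have quotient_tendsto := ((hratio.comp (tendsto_add_atTop_nat 1)).div hratio hL).const_sub 1
  rw [div_self hL, sub_self] at quotient_tendsto
  refine quotient_tendsto.congr fun k => ?_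
  simp only [logConcavityDefect, Pi.div_apply, Function.comp_apply, add_assoc, Nat.reduceAdd]
  rw [div_div_div_eq, mul_comm (u (k + 2)), sq]

lemma sq_mul_logConcavityDefect_succ_le (hpos : ∀ k, 0 < u k) {k : ℕ}
    (hstep : 0 ≤ stepMinor u k) :
    (1 - logConcavityDefect u k) ^ 2 * logConcavityDefect u (k + 1) ≤
      logConcavityDefect u k ^ 2 := by
  have normalized : stepMinor u k / u (k + 1) ^ 3 = logConcavityDefect u k ^ 2 -
      (1 - logConcavityDefect u k) ^ 2 * logConcavityDefect u (k + 1) := by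
    have h1 := (hpos (k + 1)).ne'
    have h2 := (hpos (k + 2)).ne'
    simp only [stepMinor_eq, logConcavityDefect, add_assoc, Nat.reduceAdd]
    field_simp
    ring
  exact sub_nonneg.1 (normalized ▸ div_nonneg hstep (pow_pos (hpos _) 3).le)

lemma sq_mul_logConcavityDefect_le (hpos : ∀ k, 0 < u k) {k : ℕ} (hramp : 0 ≤ rampMinor u k) :
    (1 - logConcavityDefect u (k + 1)) ^ 2 *
        (logConcavityDefect u k + 5 * logConcavityDefect u (k + 2) +
          15 * (logConcavityDefect u k * logConcavityDefect u (k + 2))) ≤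
      6 * logConcavityDefect u (k + 1) + 21 * logConcavityDefect u (k + 1) ^ 2 := by
  have normalized : rampMinor u k / u (k + 2) ^ 3 =
      6 * logConcavityDefect u (k + 1) + 21 * logConcavityDefect u (k + 1) ^ 2 -
        (1 - logConcavityDefect u (k + 1)) ^ 2 *
          (logConcavityDefect u k + 5 * logConcavityDefect u (k + 2) +
            15 * (logConcavityDefect u k * logConcavityDefect u (k + 2))) := by
    have h1 := (hpos (k + 1)).ne'
    have h2 := (hpos (k + 2)).ne'
    have h3 := (hpos (k + 3)).ne'
    simp only [rampMinor_eq, logConcavityDefect, add_assoc, Nat.reduceAdd]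
    field_simp
    ring
  exact sub_nonneg.1 (normalized ▸ div_nonneg hramp (pow_pos (hpos _) 3).le)

/- To leading order the hypotheses say `y ≤ x ^ 2` and `x ≤ 6 * y`. -/
lemma eq_zero_of_defect_inequalities {x y z : ℝ} (hx : x ∈ Set.Icc 0 (1 / 100))
    (hy : y ∈ Set.Icc 0 (1 / 100)) (hz : 0 ≤ z) (hyx : (1 - x) ^ 2 * y ≤ x ^ 2)
    (hxy : (1 - y) ^ 2 * (x + 5 * z + 15 * (x * z)) ≤ 6 * y + 21 * y ^ 2) : x = 0 := by
  obtain ⟨x_nonneg, x_le⟩ := hx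
  obtain ⟨y_nonneg, y_le⟩ := hy
  have sq_bound {t : ℝ} (ht : t ≤ 1 / 100) : 98 / 100 ≤ (1 - t) ^ 2 := by
    nlinarith [sq_nonneg t]
  have y_bound : 98 / 100 * y ≤ x ^ 2 :=
    (mul_le_mul_of_nonneg_right (sq_bound x_le) y_nonneg).trans hyx
  have x_bound : 98 / 100 * x ≤ 6 * y + 21 * y ^ 2 := by
    refine le_trans ?_ hxy
    have xz_nonneg : 0 ≤ x * z := mul_nonneg x_nonneg hz
    exact mul_le_mul (sq_bound y_le) (by linarith) x_nonneg (sq_nonneg _)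
  have x_sq_le : x ^ 2 ≤ 1 / 100 * x := by
    rw [sq]
    exact mul_le_mul_of_nonneg_right x_le x_nonneg
  have y_sq_le : y ^ 2 ≤ 1 / 100 * y := by
    rw [sq]
    exact mul_le_mul_of_nonneg_right y_le y_nonneg
  linarith

lemma eventually_mul_eq_sq (hpos : ∀ k, 0 < u k) (hlog : ∀ k, u k * u (k + 2) ≤ u (k + 1) ^ 2)
    (hstep : ∀ k, 0 ≤ stepMinor u k) (hramp : ∀ k, 0 ≤ rampMinor u k)
    (hdefect : Tendsto (logConcavityDefect u) atTop (𝓝 0)) :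
    ∀ᶠ k in atTop, u k * u (k + 2) = u (k + 1) ^ 2 := by
  have defect_nonneg (k : ℕ) := logConcavityDefect_nonneg (hlog k)
  have defect_small : ∀ᶠ k in atTop, logConcavityDefect u k ≤ 1 / 100 :=
    hdefect.eventually_le_const (by norm_num)
  filter_upwards [defect_small, (tendsto_add_atTop_nat 1).eventually defect_small] with k hk hk'
  exact (logConcavityDefect_eq_zero_iff (hpos _).ne').1 <|
    eq_zero_of_defect_inequalities ⟨defect_nonneg k, hk⟩ ⟨defect_nonneg (k + 1), hk'⟩
      (defect_nonneg (k + 2)) (sq_mul_logConcavityDefect_succ_le hpos (hstep k))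
      (sq_mul_logConcavityDefect_le hpos (hramp k))

end LogConcavityDefect

section GeometricSequences

variable {a : ℕ → ℝ}

lemma eq_geometric_of_mul_eq_sq {K : Type*} [Field K] {v : ℕ → K} (hv : ∀ k, v k ≠ 0)
    (hsq : ∀ k, v k * v (k + 2) = v (k + 1) ^ 2) (k : ℕ) : v k = v 0 * (v 1 / v 0) ^ k := by
  have ratio_eq (k : ℕ) : v (k + 1) / v k = v 1 / v 0 := by
    induction k with
    | zero => rfl
    | succ k ih =>
      rw [← ih, div_eq_div_iff (hv _) (hv _), mul_comm, hsq, sq]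
  induction k with
  | zero => rw [pow_zero, mul_one]
  | succ k ih => rw [pow_succ, ← mul_assoc, ← ih, ← ratio_eq k, mul_div_cancel₀ _ (hv k)]

lemma exists_tail_eq_geometric (hpos : ∀ᶠ k in atTop, 0 < a k)
    (hsq : ∀ᶠ k in atTop, a k * a (k + 2) = a (k + 1) ^ 2) :
    ∃ C β : ℝ, 0 < C ∧ 0 < β ∧ ∀ᶠ k in atTop, a k = C * β ^ k := by
  obtain ⟨N, hN⟩ := eventually_atTop.1 (hpos.and hsq)
  have tail_pos (k : ℕ) : 0 < a (N + k) := (hN _ (Nat.le_add_right N k)).1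
  have tail_eq := eq_geometric_of_mul_eq_sq (v := fun k => a (N + k)) (fun k => (tail_pos k).ne')
    fun k => (hN _ (Nat.le_add_right N k)).2
  set β := a (N + 1) / a N
  have hβ : 0 < β := div_pos (tail_pos 1) (tail_pos 0)
  refine ⟨a N / β ^ N, β, div_pos (tail_pos 0) (pow_pos hβ N), hβ, ?_⟩
  filter_upwards [eventually_ge_atTop N] with k hk
  obtain ⟨l, rfl⟩ := Nat.exists_eq_add_of_le hk
  rw [pow_add, ← mul_assoc, div_mul_cancel₀ _ (pow_pos hβ N).ne']
  exact tail_eq l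

lemma eq_geometric_of_rampMinor_nonneg {C β : ℝ} (hC : 0 < C) (hβ : 0 < β) {k : ℕ}
    (hlog : a k * a (k + 2) ≤ a (k + 1) ^ 2) (hramp : 0 ≤ rampMinor a k)
    (htail : ∀ j > k, a j = C * β ^ j) : a k = C * β ^ k := by
  have tail_add (l : ℕ) (hl : 0 < l) : a (k + l) = C * β ^ k * β ^ l := by
    rw [htail _ (Nat.lt_add_of_pos_right hl), pow_add, mul_assoc]
  set c := C * β ^ k
  have hc : 0 < c := mul_pos hC (pow_pos hβ k)
  rw [tail_add 1 one_pos, tail_add 2 two_pos] at hlog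
  have upper : a k ≤ c := by
    have factored : 0 ≤ c * β ^ 2 * (c - a k) := by linarith
    exact sub_nonneg.1 (nonneg_of_mul_nonneg_right factored (by positivity))
  have lower : c ≤ a k := by
    have factored : rampMinor a k = c ^ 2 * β ^ 6 * (a k - c) := by
      rw [rampMinor_eq, tail_add 1 one_pos, tail_add 2 two_pos, tail_add 3 three_pos,
        tail_add 4 four_pos]
      ring
    exact sub_nonneg.1 (nonneg_of_mul_nonneg_right (factored ▸ hramp) (by positivity))
  exact upper.antisymm lower

lemma eq_geometric_of_eventually_eq {C β : ℝ} (hC : 0 < C) (hβ : 0 < β)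
    (hlog : ∀ k, a k * a (k + 2) ≤ a (k + 1) ^ 2) (hramp : ∀ k, 0 ≤ rampMinor a k)
    (htail : ∀ᶠ k in atTop, a k = C * β ^ k) (k : ℕ) : a k = C * β ^ k := by
  obtain ⟨N, hN⟩ := eventually_atTop.1 htail
  have extend : ∀ j ≥ 0, a j = C * β ^ j := by
    refine Nat.decreasingInduction (motive := fun n _ => ∀ j ≥ n, a j = C * β ^ j)
      (fun n _ tail j hj => ?_) hN N.zero_le
    rcases hj.eq_or_lt with rfl | hj
    · exact eq_geometric_of_rampMinor_nonneg hC hβ (hlog _) (hramp _) tail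
    · exact tail j hj
  exact extend k k.zero_le

end GeometricSequences

section Rigidity

variable {a : ℕ → ℝ} {R : ℝ}

lemma frequently_ne_zero_of_not_summable (hdiv : ¬ Summable fun k => a k * R ^ k) :
    ∃ᶠ k in atTop, a k ≠ 0 := by
  refine fun eventually_zero => hdiv (summable_of_hasFiniteSupport ?_)
  rw [← Nat.cofinite_eq_atTop] at eventually_zero
  exact eventually_zero.subset fun k hk hk' => hk (by simp [not_not.1 hk'])

lemma not_summable_shift (hdiv : ¬ Summable fun k => a k * R ^ k) (N : ℕ) :
    ¬ Summable fun k => a (N + k) * R ^ k := by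
  refine fun summable_shift => hdiv ((summable_nat_add_iff N).1 ?_)
  refine (summable_shift.mul_right (R ^ N)).congr fun k => ?_
  rw [add_comm N k, mul_assoc, pow_add]

lemma eventually_mul_eq_sq_of_not_summable (ha : IsMultiplyPositive 2 a)
    (hstep : ∀ k, 0 ≤ stepMinor a (k + 1)) (hramp : ∀ k, 0 ≤ rampMinor a k)
    (hdiv : ¬ Summable fun k => a k * R ^ k) :
    ∀ᶠ k in atTop, a k * a (k + 2) = a (k + 1) ^ 2 := by
  obtain ⟨N, hN⟩ := eventually_atTop.1
    (ha.eventually_pos (frequently_ne_zero_of_not_summable hdiv))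
  let u : ℕ → ℝ := fun k => a (N + 1 + k)
  have u_pos (k : ℕ) : 0 < u k := hN _ (by omega)
  have u_log (k : ℕ) : u k * u (k + 2) ≤ u (k + 1) ^ 2 := ha.mul_le_sq _
  have u_step (k : ℕ) : 0 ≤ stepMinor u k := by
    have shifted := hstep (N + k)
    rwa [add_right_comm] at shifted
  obtain ⟨L, hL, ratio_tendsto⟩ :=
    exists_pos_tendsto_ratio u_pos u_log (not_summable_shift hdiv (N + 1))
  have u_eventually := eventually_mul_eq_sq u_pos u_log u_step (fun k => hramp _)
    (tendsto_logConcavityDefect_zero hL.ne' ratio_tendsto)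
  filter_upwards [(tendsto_sub_atTop_nat (N + 1)).eventually u_eventually,
    eventually_ge_atTop (N + 1)] with k hk hNk
  obtain ⟨l, rfl⟩ := Nat.exists_eq_add_of_le hNk
  rwa [Nat.add_sub_cancel_left] at hk

theorem exists_eq_geometric_of_isMultiplyPositive_mul
    (hstep : ∀ m, IsMultiplyPositive 3 fun k => a k * unitStep m k)
    (hramp : ∀ m, IsMultiplyPositive 3 fun k => a k * ramp m k)
    (hdiv : ¬ Summable fun k => a k * R ^ k) :
    ∃ C β : ℝ, 0 < C ∧ 0 < β ∧ ∀ k, a k = C * β ^ k := by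
  have ha : IsMultiplyPositive 2 a := by
    simpa [unitStep] using (hstep 0).mono (Nat.le_succ 2)
  have ramp_nonneg (k : ℕ) : 0 ≤ rampMinor a k := rampMinor_nonneg (hramp k)
  obtain ⟨C, β, hC, hβ, tail_eq⟩ := exists_tail_eq_geometric
    (ha.eventually_pos (frequently_ne_zero_of_not_summable hdiv))
    (eventually_mul_eq_sq_of_not_summable ha (fun k => stepMinor_succ_nonneg (hstep (k + 1)))
      ramp_nonneg hdiv)
  exact ⟨C, β, hC, hβ, eq_geometric_of_eventually_eq hC hβ ha.mul_le_sq ramp_nonneg tail_eq⟩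

end Rigidity

theorem stmt_0_general (a : ℕ → ℝ) (hdiv : ∃ r : ℝ, ¬ Summable fun k => a k * r ^ k) :
    IsTPPreserver a ↔ ∃ C β : ℝ, 0 < C ∧ 0 < β ∧ ∀ k, a k = C * β ^ k := by
  constructor
  · intro ha
    obtain ⟨r, hr⟩ := hdiv
    exact exists_eq_geometric_of_isMultiplyPositive_mul
      (fun m => (ha _ (isTotallyPositive_unitStep m)).isMultiplyPositive 3)
      (fun m => (ha _ (isTotallyPositive_ramp m)).isMultiplyPositive 3) hr
  · rintro ⟨C, β, hC, hβ, ha⟩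
    rw [funext ha]
    exact isTPPreserver_geometric hC.le hβ

/-- If the generating function of a nonnegative sequence has a finite
positive radius of convergence (it converges somewhere but not everywhere on the
positive axis), then the sequence is a TP_∞-preserver iff `a k = C * β ^ k` for some
`C > 0`, `β > 0` (i.e. `A(z) = C / (1 - β z)`). -/
theorem stmt_0 (a : ℕ → ℝ) (ha : ∀ k, 0 ≤ a k)
    (hconv : ∃ r : ℝ, 0 < r ∧ Summable fun k => a k * r ^ k)
    (hdiv : ∃ r : ℝ, 0 < r ∧ ¬ Summable fun k => a k * r ^ k) :
    IsTPPreserver a ↔ ∃ C β : ℝ, 0 < C ∧ 0 < β ∧ ∀ k, a k = C * β ^ k :=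
  stmt_0_general a (hdiv.imp fun _ => And.right)
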